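/- Let Φ be a Young function such that Φ and its conjugate Φ̃ are of class Δ₂, let {T(x)}_{x∈ℝ^N} be an N-dimensional dynamical system on Ω, assume ℳ is countably generated modulo μ-null sets, let (ε_k) ⊆ (0,1] with ε_k → 0, and let (u_k) be a sequence of measurable real functions on Q×Ω with sup_k ‖u_k‖_{Φ,Q×Ω} < ∞. Then there exist a subsequence (u_{k_j}) and a measurable function u₀ : Q×Ω×ℝ^N → ℝ, ℤ^N-periodic in its last variable with ‖u₀‖_{Φ,Q×Ω×Y} < ∞, such that (u_{k_j}) weakly stochastically 2-scale converges to u₀ along (ε_{k_j}). -/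

import Mathlib

open MeasureTheory Filter Topology ENNReal

noncomputable section

/-- Euclidean norm on `Fin N → ℝ`. -/
def enorm2 {N : ℕ} (v : Fin N → ℝ) : ℝ := Real.sqrt (∑ i, v i ^ 2)

/-- `Φ : [0,∞) → [0,∞)` is a Young function: continuous, convex, positive on `(0,∞)`,
with `Φ(t)/t → 0` as `t → 0⁺` and `Φ(t)/t → ∞` as `t → ∞` (so `Φ(0) = 0`). -/
def IsYoung (Φ : ℝ → ℝ) : Prop :=
  ContinuousOn Φ (Set.Ici 0) ∧ ConvexOn ℝ (Set.Ici 0) Φ ∧ Φ 0 = 0 ∧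
    (∀ t : ℝ, 0 < t → 0 < Φ t) ∧ (∀ t : ℝ, 0 ≤ t → 0 ≤ Φ t) ∧
    Tendsto (fun t => Φ t / t) (nhdsWithin 0 (Set.Ioi 0)) (nhds 0) ∧
    Tendsto (fun t => Φ t / t) atTop atTop

/-- The `Δ₂`-condition (at infinity). -/
def Delta2 (Φ : ℝ → ℝ) : Prop :=
  ∃ α : ℝ, 0 < α ∧ ∃ t₀ : ℝ, 0 ≤ t₀ ∧ ∀ t : ℝ, t₀ ≤ t → Φ (2 * t) ≤ α * Φ t

/-- The `Δ'`-condition (at infinity). -/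
def DeltaPrime (Φ : ℝ → ℝ) : Prop :=
  ∃ k : ℝ, 0 < k ∧ ∃ t₀ s₀ : ℝ, 0 ≤ t₀ ∧ 0 ≤ s₀ ∧
    ∀ t s : ℝ, t₀ ≤ t → s₀ ≤ s → Φ (t * s) ≤ k * Φ t * Φ s

/-- The conjugate Young function `Φ̃(t) = sup_{s ≥ 0} (st − Φ(s))`. -/
def conjY (Φ : ℝ → ℝ) (t : ℝ) : ℝ := sSup ((fun s => s * t - Φ s) '' Set.Ici 0)

/-- The Luxemburg norm `‖u‖_{Φ,X} = inf {δ > 0 : ∫_X Φ(|u|/δ) dν ≤ 1}` (`+∞` if no such `δ`). -/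
def luxNorm {X : Type*} [MeasurableSpace X] (Φ : ℝ → ℝ) (ν : Measure X) (u : X → ℝ) : ℝ≥0∞ :=
  sInf {d : ℝ≥0∞ | ∃ δ : ℝ, 0 < δ ∧ d = ENNReal.ofReal δ ∧
    (∫⁻ x, ENNReal.ofReal (Φ (|u x| / δ)) ∂ν) ≤ 1}

/-- An `N`-dimensional dynamical system on `Ω` preserving `μ`. -/
def IsDynSys {N : ℕ} {Ω : Type*} [MeasurableSpace Ω] (μ : Measure Ω)
    (T : (Fin N → ℝ) → Ω → Ω) : Prop :=
  T 0 = id ∧ (∀ x y : Fin N → ℝ, T (x + y) = T x ∘ T y) ∧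
    (∀ x : Fin N → ℝ, MeasurePreserving (T x) μ μ) ∧
    Measurable fun p : (Fin N → ℝ) × Ω => T p.1 p.2

/-- `ℤ^N`-periodicity. -/
def ZPeriodic {N : ℕ} (g : (Fin N → ℝ) → ℝ) : Prop :=
  ∀ (y : Fin N → ℝ) (k : Fin N → ℤ), g (y + fun i => (k i : ℝ)) = g y

/-- The unit cube `Y = [0,1]^N`. -/
def Ycube (N : ℕ) : Set (Fin N → ℝ) := Set.Icc 0 1

/-- `ℳ` is countably generated modulo `μ`-null sets. -/
def CountGenModNull {Ω : Type*} [MeasurableSpace Ω] (μ : Measure Ω) : Prop :=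
  ∃ S : ℕ → Set Ω, (∀ n, MeasurableSet (S n)) ∧
    ∀ A : Set Ω, MeasurableSet A →
      ∃ B : Set Ω, MeasurableSet[MeasurableSpace.generateFrom (Set.range S)] B ∧
        μ (symmDiff A B) = 0

/-- Weak stochastic two-scale convergence of `(u k)` to `u₀` along the sequence `(ε k)`. -/
def WeakStoch2Scale {N : ℕ} {Ω : Type*} [MeasurableSpace Ω] (μ : Measure Ω)
    (T : (Fin N → ℝ) → Ω → Ω) (Q : Set (Fin N → ℝ)) (ε : ℕ → ℝ)
    (u : ℕ → (Fin N → ℝ) → Ω → ℝ) (u₀ : (Fin N → ℝ) → Ω → (Fin N → ℝ) → ℝ) : Prop :=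
  ∀ φ : (Fin N → ℝ) → ℝ, ContDiff ℝ (⊤ : ℕ∞) φ → HasCompactSupport φ → tsupport φ ⊆ Q →
    ∀ ψ : Ω → ℝ, Measurable ψ → (∃ C : ℝ, ∀ ω, |ψ ω| ≤ C) →
      ∀ g : (Fin N → ℝ) → ℝ, Continuous g → ZPeriodic g →
        Tendsto
          (fun k => ∫ x in Q, (∫ ω, u k x ω * φ x * ψ (T ((ε k)⁻¹ • x) ω) *
              g (((ε k) ^ 2)⁻¹ • x) ∂μ))
          atTop
          (nhds (∫ x in Q, (∫ ω, (∫ y in Ycube N, u₀ x ω y * φ x * ψ ω * g y) ∂μ)))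

/-!
Unfolding at the scales `e` and `e²` is a measure-preserving map `(x, ω, y) ↦ (m, T(-m/e)ω)` with
`m = e²(⌊x/e²⌋ + y)`. It turns the oscillating test function `φ(x) ψ(T(x/e)ω) g(x/e²)` into
`φ(m) ψ(ω) g(y)`, and `|m - x| ≤ e²`, so that the integrals of `u_k` against oscillating test
functions are, up to an error tending to zero, integrals of the unfolded functions against the fixed
test function `φ(x) ψ(ω) g(y)`. The unfolded functions stay in one Orlicz ball over a space of
finite measure. By de la Vallée-Poussin and Dunford–Pettis a subsequence converges weakly in `L¹`,
and the modular bound passes to the limit because its sublevel sets are convex and closed.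
-/

/-- Weak convergence of a family in a real normed space, tested against the continuous linear
functionals. -/
def TendstoWeakly {E ι : Type*} [NormedAddCommGroup E] [NormedSpace ℝ E]
    (x : ι → E) (l : Filter ι) (a : E) : Prop :=
  ∀ f : StrongDual ℝ E, Tendsto (fun i => f (x i)) l (𝓝 (f a))

namespace TendstoWeakly

variable {E F ι : Type*} [NormedAddCommGroup E] [NormedSpace ℝ E] [NormedAddCommGroup F]
  [NormedSpace ℝ F] {l : Filter ι} {x y : ι → E} {a b : E}

theorem map (hx : TendstoWeakly x l a) (L : E →L[ℝ] F) :
    TendstoWeakly (fun i => L (x i)) l (L a) :=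
  fun f => hx (f.comp L)

theorem sub (hx : TendstoWeakly x l a) (hy : TendstoWeakly y l b) :
    TendstoWeakly (fun i => x i - y i) l (a - b) :=
  fun f => by simpa only [map_sub] using (hx f).sub (hy f)

theorem mem_of_convex_of_isClosed [l.NeBot] (hx : TendstoWeakly x l a) {s : Set E}
    (hconv : Convex ℝ s) (hclosed : IsClosed s) (hmem : ∀ i, x i ∈ s) : a ∈ s := by
  by_contra ha
  obtain ⟨f, c, hlt, hca⟩ := geometric_hahn_banach_closed_point hconv hclosed ha
  exact hca.not_ge (le_of_tendsto (hx f) (.of_forall fun i => (hlt _ (hmem i)).le))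

theorem norm_le [l.NeBot] (hx : TendstoWeakly x l a) {r : ℝ} (hr : ∀ i, ‖x i‖ ≤ r) : ‖a‖ ≤ r :=
  mem_closedBall_zero_iff.1 <| hx.mem_of_convex_of_isClosed (convex_closedBall 0 r)
    Metric.isClosed_closedBall fun i => mem_closedBall_zero_iff.2 (hr i)

theorem of_uniform_approx {κ : Type*} {p : Filter κ} [p.NeBot] {y : κ → ι → E} {v : κ → E}
    {δ : κ → ℝ} (hδ : Tendsto δ p (𝓝 0)) (hxy : ∀ m i, ‖x i - y m i‖ ≤ δ m)
    (hy : ∀ m, TendstoWeakly (y m) l (v m)) (hv : Tendsto v p (𝓝 a)) : TendstoWeakly x l a := by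
  intro f
  have hunif : TendstoUniformly (fun m i => f (y m i)) (fun i => f (x i)) p := by
    have hfδ : Tendsto (fun m => ‖f‖ * δ m) p (𝓝 0) := by simpa using hδ.const_mul ‖f‖
    refine Metric.tendstoUniformly_iff.2 fun e he => ?_
    filter_upwards [hfδ.eventually_lt_const he] with m hm i
    rw [dist_eq_norm, ← map_sub]
    exact ((f.le_opNorm _).trans (by gcongr; exact hxy m i)).trans_lt hm
  exact hunif.tendsto_of_eventually_tendsto (.of_forall fun m => hy m f)
    ((f.continuous.tendsto a).comp hv)

end TendstoWeakly

section HilbertSpace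

theorem exists_subseq_tendstoWeakly_of_norm_le {H : Type*} [NormedAddCommGroup H]
    [InnerProductSpace ℝ H] [CompleteSpace H] {x : ℕ → H} {C : ℝ} (hx : ∀ n, ‖x n‖ ≤ C) :
    ∃ σ : ℕ → ℕ, StrictMono σ ∧ ∃ a : H, TendstoWeakly (x ∘ σ) atTop a := by
  -- The closed span `K` of the sequence is separable, so balls of its dual are sequentially
  -- weak-* compact.
  set K : Submodule ℝ H := (Submodule.span ℝ (Set.range x)).topologicalClosure with hK
  have : CompleteSpace K := (Submodule.isClosed_topologicalClosure _).completeSpace_coe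
  have hK_separable : TopologicalSpace.IsSeparable (K : Set H) := by
    rw [hK, Submodule.topologicalClosure_coe]
    exact ((Set.countable_range x).isSeparable.span (R := ℝ)).closure
  have : TopologicalSpace.SeparableSpace K := hK_separable.separableSpace
  let y : ℕ → K := fun n =>
    ⟨x n, Submodule.le_topologicalClosure _ (Submodule.subset_span ⟨n, rfl⟩)⟩
  let φ : ℕ → WeakDual ℝ K := fun n => StrongDual.toWeakDual (InnerProductSpace.toDual ℝ K (y n))
  have hφ : ∀ n, φ n ∈ WeakDual.toStrongDual ⁻¹' Metric.closedBall (0 : StrongDual ℝ K) C :=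
    fun n => mem_closedBall_zero_iff.2
      (((InnerProductSpace.toDual ℝ K).norm_map (y n)).trans_le (hx n))
  obtain ⟨φ₀, -, σ, hσ, hlim⟩ := WeakDual.isSeqCompact_closedBall ℝ K 0 C hφ
  let a : K := (InnerProductSpace.toDual ℝ K).symm (WeakDual.toStrongDual φ₀)
  refine ⟨σ, hσ, a, fun f => ?_⟩
  let k : K := (InnerProductSpace.toDual ℝ K).symm (f.comp K.subtypeL)
  have hf : ∀ z : K, f z = inner ℝ z k := fun z => by
    rw [real_inner_comm, InnerProductSpace.toDual_symm_apply]; rfl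
  have hlim_k := ((WeakDual.eval_continuous k).tendsto φ₀).comp hlim
  rw [hf, InnerProductSpace.toDual_symm_apply]
  exact hlim_k.congr fun n => (hf (y (σ n))).symm

theorem exists_subseq_forall_tendstoWeakly_of_norm_le {H : ℕ → Type*}
    [∀ m, NormedAddCommGroup (H m)] [∀ m, InnerProductSpace ℝ (H m)] [∀ m, CompleteSpace (H m)]
    {x : ∀ m, ℕ → H m} {R : ℕ → ℝ} (hx : ∀ m n, ‖x m n‖ ≤ R m) :
    ∃ σ : ℕ → ℕ, StrictMono σ ∧ ∃ a : ∀ m, H m, ∀ m, TendstoWeakly (x m ∘ σ) atTop (a m) := by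
  -- Rescaled, the sequences assemble into one bounded sequence of the Hilbert sum of the `H m`.
  have hR : ∀ m, 0 ≤ R m := fun m => (norm_nonneg _).trans (hx m 0)
  let c : ℕ → ℝ := fun m => (1 / 2) ^ m / (1 + R m)
  have hc : ∀ m, 0 < c m := fun m => by have := hR m; positivity
  have hnorm : ∀ n m, ‖c m • x m n‖ ^ (2 : ℝ≥0∞).toReal ≤ (1 / 4) ^ m := fun n m => by
    have hcx : ‖c m • x m n‖ ≤ (1 / 2) ^ m := by
      have := hR m
      rw [norm_smul, Real.norm_of_nonneg (hc m).le, div_mul_eq_mul_div, div_le_iff₀ (by positivity)]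
      gcongr
      linarith [hx m n]
    calc ‖c m • x m n‖ ^ (2 : ℝ≥0∞).toReal = ‖c m • x m n‖ ^ 2 := by simp
      _ ≤ ((1 / 2) ^ m) ^ 2 := by gcongr
      _ = (1 / 4) ^ m := by rw [← pow_mul, mul_comm, pow_mul]; norm_num
  have hgeom : Summable fun m : ℕ => (1 / 4 : ℝ) ^ m :=
    summable_geometric_of_lt_one (by norm_num) (by norm_num)
  have hsummable : ∀ n, Summable fun m => ‖c m • x m n‖ ^ (2 : ℝ≥0∞).toReal := fun n =>
    hgeom.of_nonneg_of_le (fun m => by positivity) (hnorm n)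
  let X : ℕ → lp H 2 := fun n => ⟨fun m => c m • x m n, memℓp_gen (hsummable n)⟩
  have hX : ∀ n, ‖X n‖ ≤ 2 := fun n => by
    refine lp.norm_le_of_tsum_le (by norm_num) (by norm_num) ?_
    refine ((hsummable n).tsum_le_tsum (hnorm n) hgeom).trans ?_
    rw [tsum_geometric_of_lt_one (by norm_num) (by norm_num)]
    norm_num
  obtain ⟨σ, hσ, A, hA⟩ := exists_subseq_tendstoWeakly_of_norm_le hX
  refine ⟨σ, hσ, fun m => (c m)⁻¹ • A m, fun m => ?_⟩
  have hx_eq : x m ∘ σ = fun n => ((c m)⁻¹ • lp.evalCLM ℝ H 2 m) (X (σ n)) :=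
    funext fun n => (inv_smul_smul₀ (hc m).ne' (x m (σ n))).symm
  rw [hx_eq]
  exact hA.map ((c m)⁻¹ • lp.evalCLM ℝ H 2 m)

theorem exists_subseq_tendstoWeakly_of_forall_approx {E H : Type*} [NormedAddCommGroup E]
    [NormedSpace ℝ E] [CompleteSpace E] [NormedAddCommGroup H] [InnerProductSpace ℝ H]
    [CompleteSpace H] (L : H →L[ℝ] E) {x : ℕ → E}
    (happrox : ∀ δ : ℝ, 0 < δ → ∃ R : ℝ, ∀ n, ∃ z : H, ‖z‖ ≤ R ∧ ‖x n - L z‖ ≤ δ) :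
    ∃ σ : ℕ → ℕ, StrictMono σ ∧ ∃ a : E, TendstoWeakly (x ∘ σ) atTop a := by
  obtain ⟨δ, -, hδ_pos, hδ⟩ := exists_seq_strictAnti_tendsto (0 : ℝ)
  choose R z hzR hz using fun m => happrox (δ m) (hδ_pos m)
  obtain ⟨σ, hσ, b, hb⟩ := exists_subseq_forall_tendstoWeakly_of_norm_le hzR
  have hLb : ∀ m, TendstoWeakly (fun n => L (z m (σ n))) atTop (L (b m)) := fun m => (hb m).map L
  have hdist : ∀ m m', dist (L (b m)) (L (b m')) ≤ δ m + δ m' := fun m m' => by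
    rw [dist_eq_norm]
    refine ((hLb m).sub (hLb m')).norm_le fun n => ?_
    rw [← sub_sub_sub_cancel_left _ _ (x (σ n)), add_comm]
    exact norm_sub_le_of_le (hz m' _) (hz m _)
  have hcauchy : CauchySeq fun m => L (b m) := by
    refine Metric.cauchySeq_iff.2 fun e he => ?_
    obtain ⟨M, hM⟩ := eventually_atTop.1 (hδ.eventually_lt_const (half_pos he))
    exact ⟨M, fun m hm m' hm' => (hdist m m').trans_lt (by linarith [hM m hm, hM m' hm'])⟩
  obtain ⟨a, ha⟩ := cauchySeq_tendsto_of_complete hcauchy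
  exact ⟨σ, hσ, a, .of_uniform_approx hδ (fun m n => hz m (σ n)) hLb ha⟩

end HilbertSpace

section WeakCompactnessL1

variable {X : Type*} [MeasurableSpace X] {μ : Measure X}

/-- Dunford–Pettis: truncation approximates a uniformly integrable sequence, uniformly in `L¹`, by
a bounded sequence of `L²`. -/
theorem exists_subseq_tendstoWeakly_of_uniformIntegrable [IsFiniteMeasure μ] {f : ℕ → Lp ℝ 1 μ}
    (hf : UniformIntegrable (fun n => ⇑(f n)) 1 μ) :
    ∃ σ : ℕ → ℕ, StrictMono σ ∧ ∃ w : Lp ℝ 1 μ, TendstoWeakly (f ∘ σ) atTop w := by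
  let incl : Lp ℝ 2 μ →L[ℝ] Lp ℝ 1 μ :=
    (ContinuousLinearMap.mul ℝ ℝ).holderL μ 2 2 1 (Lp.const 2 μ 1)
  have hincl : ∀ z : Lp ℝ 2 μ, incl z =ᵐ[μ] z := fun z => by
    filter_upwards [(ContinuousLinearMap.mul ℝ ℝ).coeFn_holder (r := 1) (Lp.const 2 μ 1) z,
      Lp.coeFn_const 2 μ (1 : ℝ)] with x hx hone
    refine hx.trans ?_
    rw [ContinuousLinearMap.mul_apply', hone, Function.const_apply, one_mul]
  refine exists_subseq_tendstoWeakly_of_forall_approx incl fun δ hδ => ?_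
  obtain ⟨C, hC⟩ := hf.spec one_ne_zero one_ne_top hδ
  refine ⟨measureUnivNNReal μ ^ (2 : ℝ≥0∞).toReal⁻¹ * C, fun n => ?_⟩
  let tail : Set X := {x | C ≤ ‖f n x‖₊}
  have htail : MeasurableSet tail :=
    measurableSet_le measurable_const (Lp.stronglyMeasurable (f n)).measurable.nnnorm
  have hbound : ∀ x, ‖tailᶜ.indicator (f n) x‖ ≤ C := fun x => by
    by_cases hx : x ∈ tail
    · simp [Set.indicator_of_notMem (Set.notMem_compl_iff.2 hx)]
    · rw [Set.indicator_of_mem (Set.mem_compl hx)]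
      exact (not_le.1 hx).le
  have hmem : MemLp (tailᶜ.indicator (f n)) 2 μ :=
    .of_bound ((Lp.stronglyMeasurable _).indicator htail.compl).aestronglyMeasurable C
      (.of_forall hbound)
  refine ⟨hmem.toLp, Lp.norm_le_of_ae_bound C.2 ?_, ?_⟩
  · filter_upwards [hmem.coeFn_toLp] with x hx
    exact hx ▸ hbound x
  · have hdiff : f n - incl hmem.toLp =ᵐ[μ] tail.indicator (f n) := by
      filter_upwards [Lp.coeFn_sub (f n) (incl hmem.toLp), hincl hmem.toLp, hmem.coeFn_toLp]
        with x hsub hx hx'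
      rw [hsub, Pi.sub_apply, hx, hx', sub_eq_iff_eq_add]
      exact (congrFun (Set.indicator_self_add_compl tail (f n)) x).symm
    rw [Lp.norm_def, eLpNorm_congr_ae hdiff]
    exact toReal_le_of_le_ofReal hδ.le (hC n)

theorem exists_forall_mul_norm_le_of_tendsto_div_norm {E : Type*} [NormedAddCommGroup E]
    {G : E → ℝ} (hG : Tendsto (fun t => G t / ‖t‖) (Bornology.cobounded E) atTop) (K : ℝ) :
    ∃ C : NNReal, ∀ t, C ≤ ‖t‖₊ → K * ‖t‖ ≤ G t := by
  obtain ⟨R, -, hR⟩ := Filter.hasBasis_cobounded_norm.eventually_iff.1 (hG.eventually_ge_atTop K)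
  refine ⟨R.toNNReal + 1, fun t ht => ?_⟩
  have ht' : max R 0 + 1 ≤ ‖t‖ := mod_cast ht
  have hpos : 0 < ‖t‖ := by linarith [le_max_right R 0]
  exact (le_div_iff₀ hpos).1 (hR (show R ≤ ‖t‖ by linarith [le_max_left R 0]))

/-- De la Vallée-Poussin's criterion. -/
theorem uniformIntegrable_of_lintegral_le_of_tendsto_div_norm {E ι : Type*} [NormedAddCommGroup E]
    [IsFiniteMeasure μ] {f : ι → X → E} (hf : ∀ i, AEStronglyMeasurable (f i) μ) {G : E → ℝ}
    (hG : Tendsto (fun t => G t / ‖t‖) (Bornology.cobounded E) atTop) {c : ℝ≥0∞} (hc : c ≠ ∞)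
    (hfc : ∀ i, ∫⁻ x, ENNReal.ofReal (G (f i x)) ∂μ ≤ c) : UniformIntegrable f 1 μ := by
  refine uniformIntegrable_of le_rfl one_ne_top hf fun δ hδ => ?_
  let K : ℝ := c.toReal / δ + 1
  have hK : 0 < K := by positivity
  obtain ⟨C, hC⟩ := exists_forall_mul_norm_le_of_tendsto_div_norm hG K
  refine ⟨C, fun i => ?_⟩
  have hpoint : ∀ x, ‖{x | C ≤ ‖f i x‖₊}.indicator (f i) x‖ₑ ≤
      (ENNReal.ofReal K)⁻¹ * ENNReal.ofReal (G (f i x)) := fun x => by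
    rw [enorm_indicator_eq_indicator_enorm]
    refine Set.indicator_apply_le' (fun hx => ?_) (fun _ => zero_le)
    rw [mul_comm, ← div_eq_mul_inv, ENNReal.le_div_iff_mul_le (by simp [hK]) (by simp),
      ← ofReal_norm, ← ENNReal.ofReal_mul (norm_nonneg _), mul_comm]
    exact ENNReal.ofReal_le_ofReal (hC _ hx)
  have hcK : c ≤ ENNReal.ofReal δ * ENNReal.ofReal K := by
    rw [← ENNReal.ofReal_mul hδ.le, mul_add, mul_div_cancel₀ _ hδ.ne', mul_one]
    exact ENNReal.le_ofReal_iff_toReal_le hc (by positivity) |>.2 (by linarith)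
  calc eLpNorm ({x | C ≤ ‖f i x‖₊}.indicator (f i)) 1 μ
      ≤ ∫⁻ x, (ENNReal.ofReal K)⁻¹ * ENNReal.ofReal (G (f i x)) ∂μ := by
        rw [eLpNorm_one_eq_lintegral_enorm]
        exact lintegral_mono hpoint
    _ ≤ (ENNReal.ofReal K)⁻¹ * c := by
        rw [lintegral_const_mul' _ _ (by simp [hK])]
        gcongr
        exact hfc i
    _ ≤ ENNReal.ofReal δ := by
        rw [mul_comm, ← div_eq_mul_inv]
        exact ENNReal.div_le_of_le_mul hcK

variable {E : Type*} [NormedAddCommGroup E] {p : ℝ≥0∞} {G : E → ℝ}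

theorem convex_setOf_lintegral_comp_le [NormedSpace ℝ E] (hcont : Continuous G)
    (hconv : ConvexOn ℝ Set.univ G) (c : ℝ≥0∞) :
    Convex ℝ {w : Lp E p μ | ∫⁻ x, ENNReal.ofReal (G (w x)) ∂μ ≤ c} := by
  intro v hv w hw a b ha hb hab
  have hpoint : ∀ᵐ x ∂μ, ENNReal.ofReal (G ((a • v + b • w : Lp E p μ) x)) ≤
      ENNReal.ofReal a * ENNReal.ofReal (G (v x)) +
        ENNReal.ofReal b * ENNReal.ofReal (G (w x)) := by
    filter_upwards [Lp.coeFn_add (a • v) (b • w), Lp.coeFn_smul a v, Lp.coeFn_smul b w]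
      with x hadd hsmul_v hsmul_w
    rw [hadd, Pi.add_apply, hsmul_v, hsmul_w, ← ENNReal.ofReal_mul ha, ← ENNReal.ofReal_mul hb]
    exact (ENNReal.ofReal_le_ofReal (hconv.2 trivial trivial ha hb hab)).trans ofReal_add_le
  have hmeas : AEMeasurable (fun x => ENNReal.ofReal (G (v x))) μ :=
    (hcont.comp_aestronglyMeasurable (Lp.aestronglyMeasurable v)).aemeasurable.ennreal_ofReal
  calc ∫⁻ x, ENNReal.ofReal (G ((a • v + b • w : Lp E p μ) x)) ∂μ
      ≤ ENNReal.ofReal a * ∫⁻ x, ENNReal.ofReal (G (v x)) ∂μ +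
          ENNReal.ofReal b * ∫⁻ x, ENNReal.ofReal (G (w x)) ∂μ := by
        rw [← lintegral_const_mul' _ _ ofReal_ne_top, ← lintegral_const_mul' _ _ ofReal_ne_top,
          ← lintegral_add_left' (hmeas.const_mul _)]
        exact lintegral_mono_ae hpoint
    _ ≤ ENNReal.ofReal a * c + ENNReal.ofReal b * c := by gcongr <;> assumption
    _ = c := by rw [← add_mul, ← ENNReal.ofReal_add ha hb, hab, ofReal_one, one_mul]

theorem isClosed_setOf_lintegral_comp_le [Fact (1 ≤ p)] (hcont : Continuous G) (c : ℝ≥0∞) :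
    IsClosed {w : Lp E p μ | ∫⁻ x, ENNReal.ofReal (G (w x)) ∂μ ≤ c} := by
  refine IsSeqClosed.isClosed fun v w hv hvw => ?_
  obtain ⟨ns, -, hae⟩ := (tendstoInMeasure_of_tendsto_Lp hvw).exists_seq_tendsto_ae
  have hmeas : ∀ i, AEMeasurable (fun x => ENNReal.ofReal (G (v (ns i) x))) μ := fun i =>
    (hcont.comp_aestronglyMeasurable (Lp.aestronglyMeasurable _)).aemeasurable.ennreal_ofReal
  calc ∫⁻ x, ENNReal.ofReal (G (w x)) ∂μ
      = ∫⁻ x, liminf (fun i => ENNReal.ofReal (G (v (ns i) x))) atTop ∂μ := by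
        refine lintegral_congr_ae (hae.mono fun x hx => ?_)
        exact (ENNReal.tendsto_ofReal ((hcont.tendsto _).comp hx)).liminf_eq.symm
    _ ≤ liminf (fun i => ∫⁻ x, ENNReal.ofReal (G (v (ns i) x)) ∂μ) atTop :=
        lintegral_liminf_le' hmeas
    _ ≤ c := liminf_le_of_frequently_le' (.of_forall fun i => hv (ns i))

theorem TendstoWeakly.tendsto_integral_mul {ι : Type*} {l : Filter ι} {f : ι → Lp ℝ 1 μ}
    {w : Lp ℝ 1 μ} (hf : TendstoWeakly f l w) {h : X → ℝ} (hh : MemLp h ∞ μ) :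
    Tendsto (fun i => ∫ x, f i x * h x ∂μ) l (𝓝 (∫ x, w x * h x ∂μ)) := by
  have hpair : ∀ v : Lp ℝ 1 μ, ∫ x, v x * h x ∂μ =
      ((ContinuousLinearMap.mul ℝ ℝ).lpPairing μ 1 ∞).flip hh.toLp v := fun v => by
    rw [ContinuousLinearMap.flip_apply, ContinuousLinearMap.lpPairing_eq_integral]
    refine integral_congr_ae (hh.coeFn_toLp.mono fun x hx => ?_)
    simp [hx]
  simpa only [hpair] using hf (((ContinuousLinearMap.mul ℝ ℝ).lpPairing μ 1 ∞).flip hh.toLp)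

theorem exists_subseq_tendsto_integral_mul_of_lintegral_le [IsFiniteMeasure μ] {G : ℝ → ℝ}
    (hcont : Continuous G) (hconv : ConvexOn ℝ Set.univ G)
    (hG : Tendsto (fun t => G t / ‖t‖) (Bornology.cobounded ℝ) atTop) {f : ℕ → X → ℝ}
    (hf : ∀ k, AEStronglyMeasurable (f k) μ) {c : ℝ≥0∞} (hc : c ≠ ∞)
    (hfc : ∀ k, ∫⁻ x, ENNReal.ofReal (G (f k x)) ∂μ ≤ c) :
    ∃ σ : ℕ → ℕ, StrictMono σ ∧ ∃ w : Lp ℝ 1 μ, ∫⁻ x, ENNReal.ofReal (G (w x)) ∂μ ≤ c ∧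
      ∀ h : X → ℝ, MemLp h ∞ μ →
        Tendsto (fun j => ∫ x, f (σ j) x * h x ∂μ) atTop (𝓝 (∫ x, w x * h x ∂μ)) := by
  have hUI := uniformIntegrable_of_lintegral_le_of_tendsto_div_norm hf hG hc hfc
  let F : ℕ → Lp ℝ 1 μ := fun k => (hUI.memLp k).toLp
  have hF : ∀ k, f k =ᵐ[μ] F k := fun k => (hUI.memLp k).coeFn_toLp.symm
  obtain ⟨σ, hσ, w, hw⟩ := exists_subseq_tendstoWeakly_of_uniformIntegrable (hUI.ae_eq hF)
  refine ⟨σ, hσ, w, ?_, fun h hh => ?_⟩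
  · refine hw.mem_of_convex_of_isClosed (convex_setOf_lintegral_comp_le hcont hconv c)
      (isClosed_setOf_lintegral_comp_le hcont c) fun j => ?_
    refine (lintegral_congr_ae ((hF (σ j)).mono fun x hx => ?_)).symm.trans_le (hfc (σ j))
    simp only [Function.comp_apply, hx]
  · refine (hw.tendsto_integral_mul hh).congr fun j => ?_
    refine integral_congr_ae ((hF (σ j)).mono fun x hx => ?_)
    simp only [Function.comp_apply, hx]

end WeakCompactnessL1

namespace IsYoung

variable {Φ : ℝ → ℝ} {C : ℝ}

theorem monotoneOn (hΦ : IsYoung Φ) : MonotoneOn Φ (Set.Ici 0) := by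
  obtain ⟨-, hconv, hzero, -, hnonneg, -, -⟩ := hΦ
  intro s hs t ht hst
  rcases (Set.mem_Ici.1 ht).eq_or_lt with rfl | ht_pos
  · rw [le_antisymm hst hs]
  have hle : s / t ≤ 1 := (div_le_one ht_pos).2 hst
  have hs_nonneg : 0 ≤ s / t := div_nonneg hs ht
  calc Φ s = Φ ((s / t) • t + (1 - s / t) • 0) := by
        rw [smul_zero, add_zero, smul_eq_mul, div_mul_cancel₀ _ ht_pos.ne']
    _ ≤ (s / t) • Φ t + (1 - s / t) • Φ 0 :=
        hconv.2 ht Set.self_mem_Ici hs_nonneg (sub_nonneg.2 hle) (add_sub_cancel _ _)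
    _ ≤ Φ t := by
        rw [hzero, smul_zero, add_zero, smul_eq_mul]
        exact mul_le_of_le_one_left (hnonneg t ht) hle

theorem continuous_comp_abs_div (hΦ : IsYoung Φ) (hC : 0 < C) :
    Continuous fun t : ℝ => Φ (|t| / C) :=
  hΦ.1.comp_continuous (by fun_prop) fun t => Set.mem_Ici.2 (by positivity)

theorem convexOn_comp_abs_div (hΦ : IsYoung Φ) (hC : 0 < C) :
    ConvexOn ℝ Set.univ fun t : ℝ => Φ (|t| / C) := by
  refine ⟨convex_univ, fun s _ t _ a b ha hb hab => ?_⟩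
  have hmem : ∀ r : ℝ, |r| / C ∈ Set.Ici 0 := fun r => Set.mem_Ici.2 (by positivity)
  refine (hΦ.monotoneOn (hmem _) ?_ ?_).trans (hΦ.2.1.2 (hmem s) (hmem t) ha hb hab)
  · exact hΦ.2.1.1 (hmem s) (hmem t) ha hb hab
  · calc |a • s + b • t| / C ≤ (a * |s| + b * |t|) / C := by
          gcongr
          refine (abs_add_le _ _).trans_eq ?_
          rw [smul_eq_mul, smul_eq_mul, abs_mul, abs_mul, abs_of_nonneg ha, abs_of_nonneg hb]
      _ = a • (|s| / C) + b • (|t| / C) := by rw [smul_eq_mul, smul_eq_mul]; ring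

theorem tendsto_comp_abs_div_div_norm (hΦ : IsYoung Φ) (hC : 0 < C) :
    Tendsto (fun t : ℝ => Φ (|t| / C) / ‖t‖) (Bornology.cobounded ℝ) atTop := by
  obtain ⟨-, -, -, -, -, -, hlim⟩ := hΦ
  have harg : Tendsto (fun t : ℝ => |t| / C) (Bornology.cobounded ℝ) atTop :=
    tendsto_norm_cobounded_atTop.atTop_div_const hC
  refine ((hlim.comp harg).atTop_div_const hC).congr fun t => ?_
  simp only [Function.comp_apply, Real.norm_eq_abs]
  rw [div_div, div_mul_cancel₀ _ hC.ne']

theorem exists_forall_lintegral_le_one (hΦ : IsYoung Φ) {X κ : Type*} [MeasurableSpace X]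
    {ν : Measure X} {u : κ → X → ℝ} (hu : ⨆ k, luxNorm Φ ν (u k) < ⊤) :
    ∃ C : ℝ, 0 < C ∧ ∀ k, ∫⁻ x, ENNReal.ofReal (Φ (|u k x| / C)) ∂ν ≤ 1 := by
  obtain ⟨C, hC⟩ := exists_between hu
  have hC_pos : 0 < C.toReal := toReal_pos (bot_le.trans_lt hC.1).ne' hC.2.ne
  refine ⟨C.toReal, hC_pos, fun k => ?_⟩
  obtain ⟨-, ⟨δ, hδ, rfl, hmodular⟩, hlt⟩ := sInf_lt_iff.1 ((le_iSup _ k).trans_lt hC.1)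
  have hδC : δ ≤ C.toReal := ((ofReal_lt_iff_lt_toReal hδ.le hC.2.ne).1 hlt).le
  refine (lintegral_mono fun x => ENNReal.ofReal_le_ofReal ?_).trans hmodular
  exact hΦ.monotoneOn (Set.mem_Ici.2 (by positivity)) (Set.mem_Ici.2 (by positivity))
    (by gcongr)

end IsYoung

theorem luxNorm_lt_top {Φ : ℝ → ℝ} {X : Type*} [MeasurableSpace X] {ν : Measure X} {u : X → ℝ}
    {C : ℝ} (hC : 0 < C) (hu : ∫⁻ x, ENNReal.ofReal (Φ (|u x| / C)) ∂ν ≤ 1) :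
    luxNorm Φ ν u < ⊤ :=
  sInf_lt_iff.2 ⟨ENNReal.ofReal C, ⟨C, hC, rfl, hu⟩, ofReal_lt_top⟩

section Lattice

variable {ι : Type*}

/-- The coordinatewise integer part of a vector. -/
def floorPart (x : ι → ℝ) : ι → ℤ := fun i => ⌊x i⌋

/-- The coordinatewise fractional part of a vector. -/
def fractPart (x : ι → ℝ) : ι → ℝ := fun i => Int.fract (x i)

/-- The inclusion of the integer lattice. -/
def latticePoint (k : ι → ℤ) : ι → ℝ := fun i => (k i : ℝ)

/-- The half-open unit cube `[0,1)^ι`, a fundamental domain for the integer lattice. -/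
def unitCell (ι : Type*) : Set (ι → ℝ) := Set.univ.pi fun _ => Set.Ico 0 1

/-- Lebesgue measure on the unit cell. -/
abbrev cellMeasure (ι : Type*) [Fintype ι] : Measure (ι → ℝ) := volume.restrict (unitCell ι)

/-- The map `(x, y) ↦ η(⌊x/η⌋ + y)`, which moves `x` to the point of relative position `y` inside
the cell of the lattice `ηℤ^ι` that contains `x`. -/
def periodicUnfolding (η : ℝ) (p : (ι → ℝ) × (ι → ℝ)) : ι → ℝ :=
  η • (latticePoint (floorPart (η⁻¹ • p.1)) + p.2)

theorem fractPart_add_latticePoint (y : ι → ℝ) (k : ι → ℤ) :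
    fractPart (y + latticePoint k) = fractPart y :=
  funext fun i => Int.fract_add_intCast (y i) (k i)

theorem fractPart_add_latticePoint_floorPart (y : ι → ℝ) :
    fractPart y + latticePoint (floorPart y) = y :=
  funext fun i => Int.fract_add_floor (y i)

theorem fractPart_of_mem_unitCell {y : ι → ℝ} (hy : y ∈ unitCell ι) : fractPart y = y :=
  funext fun i => Int.fract_eq_self.2 (hy i trivial)

theorem fractPart_mem_Icc (y : ι → ℝ) : fractPart y ∈ Set.Icc 0 1 :=
  ⟨fun _ => Int.fract_nonneg _, fun _ => (Int.fract_lt_one _).le⟩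

theorem floorPart_latticePoint_add (k : ι → ℤ) (y : ι → ℝ) :
    floorPart (latticePoint k + y) = k ↔ y ∈ unitCell ι := by
  simp only [floorPart, latticePoint, unitCell, Set.mem_univ_pi, funext_iff, Pi.add_apply,
    Int.floor_intCast_add, add_eq_left, Int.floor_eq_zero_iff]

theorem inv_smul_periodicUnfolding {η : ℝ} (hη : η ≠ 0) (x y : ι → ℝ) :
    η⁻¹ • periodicUnfolding η (x, y) = y + latticePoint (floorPart (η⁻¹ • x)) := by
  rw [periodicUnfolding, inv_smul_smul₀ hη, add_comm]

theorem measurable_floorPart : Measurable (floorPart : (ι → ℝ) → ι → ℤ) :=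
  measurable_pi_lambda _ fun i => Int.measurable_floor.comp (measurable_pi_apply i)

theorem measurable_fractPart : Measurable (fractPart : (ι → ℝ) → ι → ℝ) :=
  measurable_pi_lambda _ fun i => measurable_fract.comp (measurable_pi_apply i)

theorem measurable_latticePoint : Measurable (latticePoint : (ι → ℤ) → ι → ℝ) :=
  measurable_pi_lambda _ fun i => measurable_from_top.comp (measurable_pi_apply i)

theorem measurableSet_unitCell [Countable ι] : MeasurableSet (unitCell ι) :=
  .univ_pi fun _ => measurableSet_Ico

variable [Fintype ι]

instance isProbabilityMeasure_cellMeasure : IsProbabilityMeasure (cellMeasure ι) :=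
  ⟨by simp [unitCell, Real.volume_pi_Ico]⟩

theorem cellMeasure_eq_restrict_Icc : cellMeasure ι = volume.restrict (Set.Icc 0 1) :=
  Measure.restrict_congr_set <|
    Measure.univ_pi_Ico_ae_eq_Icc (μ := fun _ : ι => (volume : Measure ℝ)) (f := 0) (g := 1)

theorem volume_floorPart_preimage_inter (k : ι → ℤ) (s : Set (ι → ℝ)) :
    volume (floorPart ⁻¹' {k} ∩ s) =
      cellMeasure ι ((latticePoint k + ·) ⁻¹' s) := by
  rw [Measure.restrict_apply' measurableSet_unitCell,
    ← measure_preimage_add volume (latticePoint k), Set.preimage_inter, Set.inter_comm]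
  congr 2
  ext y
  exact floorPart_latticePoint_add k y

theorem measurePreserving_floorPart :
    MeasurePreserving (floorPart : (ι → ℝ) → ι → ℤ) volume Measure.count := by
  refine ⟨measurable_floorPart, Measure.ext_of_singleton fun k => ?_⟩
  rw [Measure.map_apply measurable_floorPart (measurableSet_singleton k), Measure.count_singleton,
    ← Set.inter_univ (floorPart ⁻¹' {k}), volume_floorPart_preimage_inter, Set.preimage_univ,
    measure_univ]

theorem measurePreserving_latticePoint_add :
    MeasurePreserving (fun p : (ι → ℤ) × (ι → ℝ) => latticePoint p.1 + p.2)
      (Measure.count.prod (cellMeasure ι)) volume := by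
  have hmeas : Measurable fun p : (ι → ℤ) × (ι → ℝ) => latticePoint p.1 + p.2 :=
    (measurable_latticePoint.comp measurable_fst).add measurable_snd
  refine ⟨hmeas, Measure.ext fun s hs => ?_⟩
  have hfiber : ∀ k : ι → ℤ, MeasurableSet (floorPart ⁻¹' {k} : Set (ι → ℝ)) := fun k =>
    measurable_floorPart (measurableSet_singleton k)
  calc (Measure.count.prod (cellMeasure ι)).map _ s
      = ∑' k : ι → ℤ, cellMeasure ι ((latticePoint k + ·) ⁻¹' s) := by
        rw [Measure.map_apply hmeas hs, Measure.prod_apply (hmeas hs), lintegral_count]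
        rfl
    _ = ∑' k : ι → ℤ, volume.restrict s (floorPart ⁻¹' {k}) := by
        refine tsum_congr fun k => ?_
        rw [← volume_floorPart_preimage_inter, Measure.restrict_apply (hfiber k)]
    _ = volume s := by
        rw [← tsum_univ, tsum_measure_preimage_singleton Set.countable_univ fun k _ => hfiber k,
          Set.preimage_univ, Measure.restrict_apply_univ]

theorem measurePreserving_periodicUnfolding {η : ℝ} (hη : η ≠ 0) :
    MeasurePreserving (periodicUnfolding η : (ι → ℝ) × (ι → ℝ) → ι → ℝ)
      (volume.prod (cellMeasure ι)) volume := by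
  let c : ℝ → ℝ≥0∞ := fun r => ENNReal.ofReal |(r ^ Fintype.card ι)⁻¹|
  have hscale : ∀ r : ℝ, r ≠ 0 →
      MeasurePreserving (fun x : ι → ℝ => r • x) volume (c r • volume) := fun r hr =>
    ⟨measurable_const_smul r, by
      rw [Measure.map_addHaar_smul _ hr, Module.finrank_fintype_fun_eq_card]⟩
  have hcell := measurePreserving_latticePoint_add.comp
    ((measurePreserving_floorPart (ι := ι)).prod (.id (cellMeasure ι)))
  have hin := (hscale η⁻¹ (inv_ne_zero hη)).prod (.id (cellMeasure ι))
  rw [Measure.prod_smul_left] at hin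
  have hc : c η⁻¹ • c η • (volume : Measure (ι → ℝ)) = volume := by
    rw [smul_smul, ← ENNReal.ofReal_mul (abs_nonneg _), ← abs_mul, ← mul_inv, ← mul_pow,
      inv_mul_cancel₀ hη]
    simp
  have h := ((hscale η hη).smul_measure (c η⁻¹)).comp ((hcell.smul_measure (c η⁻¹)).comp hin)
  rwa [hc] at h

theorem dist_periodicUnfolding_le {η : ℝ} (hη : η ≠ 0) (x : ι → ℝ) {y : ι → ℝ}
    (hy : y ∈ unitCell ι) : dist (periodicUnfolding η (x, y)) x ≤ |η| := by
  have hsub : periodicUnfolding η (x, y) - x = η • (y - fractPart (η⁻¹ • x)) := by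
    rw [← inv_smul_eq_iff₀ hη, smul_sub, inv_smul_periodicUnfolding hη, sub_eq_sub_iff_add_eq_add,
      add_assoc, add_comm (latticePoint _), fractPart_add_latticePoint_floorPart]
  have hcell : ‖y - fractPart (η⁻¹ • x)‖ ≤ 1 := by
    refine (pi_norm_le_iff_of_nonneg zero_le_one).2 fun i => ?_
    exact Real.dist_le_of_mem_Icc_01 (Set.Ico_subset_Icc_self (hy i trivial))
      ⟨Int.fract_nonneg _, (Int.fract_lt_one _).le⟩
  rw [dist_eq_norm, hsub, norm_smul, Real.norm_eq_abs]
  exact mul_le_of_le_one_right (abs_nonneg η) hcell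

end Lattice

namespace ZPeriodic

variable {N : ℕ} {g : (Fin N → ℝ) → ℝ}

theorem comp_fractPart (f : (Fin N → ℝ) → ℝ) : ZPeriodic fun y => f (fractPart y) :=
  fun y k => congrArg f (fractPart_add_latticePoint y k)

theorem apply_fractPart (hg : ZPeriodic g) (y : Fin N → ℝ) : g (fractPart y) = g y := by
  conv_rhs => rw [← fractPart_add_latticePoint_floorPart y]
  exact (hg _ _).symm

theorem apply_inv_smul_periodicUnfolding (hg : ZPeriodic g) {η : ℝ} (hη : η ≠ 0)
    (x y : Fin N → ℝ) : g (η⁻¹ • periodicUnfolding η (x, y)) = g y := by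
  rw [inv_smul_periodicUnfolding hη]
  exact hg y _

theorem exists_bound (hg : ZPeriodic g) (hcont : Continuous g) : ∃ C, ∀ y, |g y| ≤ C := by
  obtain ⟨C, hC⟩ := isCompact_Icc.exists_bound_of_continuousOn
    (hcont.continuousOn (s := Set.Icc 0 1))
  exact ⟨C, fun y => hg.apply_fractPart y ▸ hC _ (fractPart_mem_Icc y)⟩

end ZPeriodic

section StochasticUnfolding

variable {N : ℕ} {Ω : Type*}

/-- Periodic unfolding at scale `e²`, combined with the inverse of the flow at scale `e`: it turns
the oscillating test function `(x, ω) ↦ φ(x) ψ(T(x/e)ω) g(x/e²)` into `φ(m) ψ(ω) g(y)`, where `m`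
is the unfolded point. -/
def stochasticUnfolding (T : (Fin N → ℝ) → Ω → Ω) (e : ℝ) (p : ((Fin N → ℝ) × Ω) × (Fin N → ℝ)) :
    (Fin N → ℝ) × Ω :=
  (periodicUnfolding (e ^ 2) (p.1.1, p.2),
    T (-(e⁻¹ • periodicUnfolding (e ^ 2) (p.1.1, p.2))) p.1.2)

variable [MeasurableSpace Ω] {μ : Measure Ω} {T : (Fin N → ℝ) → Ω → Ω}

namespace IsDynSys

theorem apply_neg_cancel (hT : IsDynSys μ T) (x : Fin N → ℝ) (ω : Ω) : T x (T (-x) ω) = ω := by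
  rw [← Function.comp_apply (f := T x), ← hT.2.1, add_neg_cancel, hT.1, id]

theorem measurable_comp_smul (hT : IsDynSys μ T) (r : ℝ) :
    Measurable fun q : (Fin N → ℝ) × Ω => T (r • q.1) q.2 :=
  hT.2.2.2.comp ((measurable_fst.const_smul r).prodMk measurable_snd)

theorem measurePreserving_stochasticUnfolding [SFinite μ] (hT : IsDynSys μ T) {e : ℝ}
    (he : e ≠ 0) :
    MeasurePreserving (stochasticUnfolding T e)
      ((volume.prod μ).prod (cellMeasure (Fin N))) (volume.prod μ) := by
  have hflow : MeasurePreserving (fun q : (Fin N → ℝ) × Ω => (q.1, T (-(e⁻¹ • q.1)) q.2))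
      (volume.prod μ) (volume.prod μ) := by
    refine MeasurePreserving.skew_product (.id _) (g := fun x => T (-(e⁻¹ • x))) ?_
      (.of_forall fun x => (hT.2.2.1 _).map_eq)
    simpa only [neg_smul, Function.uncurry_def] using hT.measurable_comp_smul (-e⁻¹)
  have hswap : MeasurePreserving
      (fun p : ((Fin N → ℝ) × Ω) × (Fin N → ℝ) => ((p.1.1, p.2), p.1.2))
      ((volume.prod μ).prod (cellMeasure (Fin N)))
      ((volume.prod (cellMeasure (Fin N))).prod μ) :=
    (measurePreserving_prodAssoc _ _ _).symm.comp
      (((MeasurePreserving.id _).prod Measure.measurePreserving_swap).comp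
        (measurePreserving_prodAssoc _ _ _))
  exact hflow.comp
    (((measurePreserving_periodicUnfolding (pow_ne_zero 2 he)).prod (.id μ)).comp hswap)

end IsDynSys

end StochasticUnfolding

theorem tendsto_integral_mul_sub_integral_mul_zero {X ι : Type*} [MeasurableSpace X]
    {μ : Measure X} {l : Filter ι} {f h h' : ι → X → ℝ} (hf : ∀ i, MemLp (f i) 1 μ) {B : NNReal}
    (hB : ∀ i, eLpNorm (f i) 1 μ ≤ B) (hh : ∀ i, MemLp (h i) ∞ μ) (hh' : ∀ i, MemLp (h' i) ∞ μ)
    (hclose : ∀ δ > 0, ∀ᶠ i in l, ∀ᵐ x ∂μ, |h i x - h' i x| ≤ δ) :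
    Tendsto (fun i => ∫ x, f i x * h i x ∂μ - ∫ x, f i x * h' i x ∂μ) l (𝓝 0) := by
  refine Metric.tendsto_nhds.2 fun r hr => ?_
  filter_upwards [hclose (r / (B + 1)) (by positivity)] with i hi
  have hint : Integrable (fun x => f i x * h i x) μ := (hf i).integrable_mul (hh i)
  have hint' : Integrable (fun x => f i x * h' i x) μ := (hf i).integrable_mul (hh' i)
  rw [dist_zero_right, ← integral_sub hint hint']
  have hpoint : ∀ᵐ x ∂μ, ‖f i x * h i x - f i x * h' i x‖ ≤ r / (B + 1) * ‖f i x‖ := by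
    filter_upwards [hi] with x hx
    rw [← mul_sub, norm_mul, mul_comm]
    gcongr
    exact hx
  have hnorm : ∫ x, ‖f i x‖ ∂μ ≤ B := by
    rw [integral_norm_eq_lintegral_enorm (hf i).1, ← eLpNorm_one_eq_lintegral_enorm]
    exact toReal_le_coe_of_le_coe (hB i)
  calc ‖∫ x, f i x * h i x - f i x * h' i x ∂μ‖
      ≤ ∫ x, r / (B + 1) * ‖f i x‖ ∂μ :=
        norm_integral_le_of_norm_le ((memLp_one_iff_integrable.1 (hf i)).norm.const_mul _) hpoint
    _ ≤ r / (B + 1) * B := by rw [integral_const_mul]; gcongr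
    _ < r := by
        rw [div_mul_eq_mul_div, div_lt_iff₀ (by positivity)]
        nlinarith

section Unfolded

variable {N : ℕ} {Ω : Type*} [MeasurableSpace Ω] {μ : Measure Ω} [SFinite μ]
  {T : (Fin N → ℝ) → Ω → Ω} {Q : Set (Fin N → ℝ)} {e : ℝ} {v : (Fin N → ℝ) × Ω → ℝ}

/-- The unfolding of a function on `Q × Ω`, extended by zero outside `Q`. -/
def unfolded (T : (Fin N → ℝ) → Ω → Ω) (Q : Set (Fin N → ℝ)) (e : ℝ) (v : (Fin N → ℝ) × Ω → ℝ)
    (p : ((Fin N → ℝ) × Ω) × (Fin N → ℝ)) : ℝ :=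
  (Q ×ˢ Set.univ).indicator v (stochasticUnfolding T e p)

theorem measurable_unfolded (hT : IsDynSys μ T) (hQ : MeasurableSet Q) (he : e ≠ 0)
    (hv : Measurable v) : Measurable (unfolded T Q e v) :=
  (hv.indicator (hQ.prod .univ)).comp (hT.measurePreserving_stochasticUnfolding he).measurable

theorem lintegral_comp_unfolded (hT : IsDynSys μ T) (hQ : MeasurableSet Q) (he : e ≠ 0)
    (hv : Measurable v) {H : ℝ → ℝ≥0∞} (hH : Measurable H) (hzero : H 0 = 0) :
    ∫⁻ p, H (unfolded T Q e v p) ∂((volume.prod μ).prod (cellMeasure (Fin N))) =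
      ∫⁻ q, H (v q) ∂((volume.restrict Q).prod μ) := by
  have hmeas : Measurable fun q => H (v q) := hH.comp hv
  rw [Measure.restrict_prod_eq_prod_univ, ← lintegral_indicator (hQ.prod .univ),
    ← (hT.measurePreserving_stochasticUnfolding he).lintegral_comp
      (hmeas.indicator (hQ.prod .univ))]
  refine lintegral_congr fun p => ?_
  exact (congrFun (Set.indicator_comp_of_zero hzero) _).symm

theorem eLpNorm_one_unfolded (hT : IsDynSys μ T) (hQ : MeasurableSet Q) (he : e ≠ 0)
    (hv : Measurable v) :
    eLpNorm (unfolded T Q e v) 1 ((volume.prod μ).prod (cellMeasure (Fin N))) =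
      eLpNorm v 1 ((volume.restrict Q).prod μ) := by
  rw [eLpNorm_one_eq_lintegral_enorm, eLpNorm_one_eq_lintegral_enorm]
  exact lintegral_comp_unfolded hT hQ he hv measurable_enorm enorm_zero

theorem integral_unfolded_mul (hT : IsDynSys μ T) (hQ : MeasurableSet Q) (he : e ≠ 0)
    (hv : Measurable v) {h : (Fin N → ℝ) × Ω → ℝ} (hh : Measurable h) :
    ∫ p, unfolded T Q e v p * h (stochasticUnfolding T e p)
        ∂((volume.prod μ).prod (cellMeasure (Fin N))) =
      ∫ q, v q * h q ∂((volume.restrict Q).prod μ) := by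
  have hS := hT.measurePreserving_stochasticUnfolding he
  have hmeas : Measurable fun q => v q * h q := hv.mul hh
  have hmap := integral_map (μ := (volume.prod μ).prod (cellMeasure (Fin N))) hS.aemeasurable
    (hmeas.indicator (hQ.prod .univ)).aestronglyMeasurable
  rw [hS.map_eq] at hmap
  rw [Measure.restrict_prod_eq_prod_univ, ← integral_indicator (hQ.prod .univ), hmap]
  refine integral_congr_ae (.of_forall fun p => ?_)
  exact (Set.indicator_mul_left _ v h).symm

end Unfolded

section TestFunctions

variable {N : ℕ} {Ω : Type*} {T : (Fin N → ℝ) → Ω → Ω} {φ g : (Fin N → ℝ) → ℝ} {ψ : Ω → ℝ}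

/-- The separated test function `(x, ω, y) ↦ φ(x) ψ(ω) g(y)`. -/
def separatedTest (φ : (Fin N → ℝ) → ℝ) (ψ : Ω → ℝ) (g : (Fin N → ℝ) → ℝ)
    (p : ((Fin N → ℝ) × Ω) × (Fin N → ℝ)) : ℝ :=
  φ p.1.1 * ψ p.1.2 * g p.2

/-- The oscillating test function `(x, ω) ↦ φ(x) ψ(T(x/e)ω) g(x/e²)`. -/
def oscillatingTest (T : (Fin N → ℝ) → Ω → Ω) (e : ℝ) (φ : (Fin N → ℝ) → ℝ) (ψ : Ω → ℝ)
    (g : (Fin N → ℝ) → ℝ) (q : (Fin N → ℝ) × Ω) : ℝ :=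
  separatedTest φ ψ g ((q.1, T (e⁻¹ • q.1) q.2), (e ^ 2)⁻¹ • q.1)

/-- The unfolding of the oscillating test function with the parameters `e`, `φ`, `ψ`, `g`. -/
def unfoldedTest (e : ℝ) (φ : (Fin N → ℝ) → ℝ) (ψ : Ω → ℝ) (g : (Fin N → ℝ) → ℝ)
    (p : ((Fin N → ℝ) × Ω) × (Fin N → ℝ)) : ℝ :=
  separatedTest φ ψ g ((periodicUnfolding (e ^ 2) (p.1.1, p.2), p.1.2), p.2)

theorem abs_separatedTest_sub_le {Cψ Cg : ℝ} (hψ : ∀ ω, |ψ ω| ≤ Cψ) (hg : ∀ y, |g y| ≤ Cg)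
    (x x' : Fin N → ℝ) (ω : Ω) (y : Fin N → ℝ) :
    |separatedTest φ ψ g ((x, ω), y) - separatedTest φ ψ g ((x', ω), y)| ≤
      |φ x - φ x'| * (Cψ * Cg) := by
  have hCψ : 0 ≤ Cψ := (abs_nonneg _).trans (hψ ω)
  rw [separatedTest, separatedTest, ← sub_mul, ← sub_mul, mul_assoc, abs_mul, abs_mul]
  gcongr
  exacts [hψ ω, hg y]

theorem exists_bound_separatedTest (hφ : ∃ C, ∀ x, |φ x| ≤ C) (hψ : ∃ C, ∀ ω, |ψ ω| ≤ C)
    (hg : ∃ C, ∀ y, |g y| ≤ C) : ∃ C, ∀ p, |separatedTest φ ψ g p| ≤ C := by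
  obtain ⟨⟨Cφ, hφ⟩, ⟨Cψ, hψ⟩, ⟨Cg, hg⟩⟩ := And.intro hφ (And.intro hψ hg)
  refine ⟨Cφ * Cψ * Cg, fun p => ?_⟩
  have hCφ : 0 ≤ Cφ := (abs_nonneg _).trans (hφ p.1.1)
  have hCψ : 0 ≤ Cψ := (abs_nonneg _).trans (hψ p.1.2)
  rw [separatedTest, abs_mul, abs_mul]
  gcongr
  exacts [hφ _, hψ _, hg _]

variable [MeasurableSpace Ω] {μ : Measure Ω}

theorem measurable_separatedTest (hφ : Measurable φ) (hψ : Measurable ψ) (hg : Measurable g) :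
    Measurable (separatedTest φ ψ g) :=
  ((hφ.comp (measurable_fst.comp measurable_fst)).mul
    (hψ.comp (measurable_snd.comp measurable_fst))).mul (hg.comp measurable_snd)

theorem measurable_oscillatingTest (hT : IsDynSys μ T) (e : ℝ) (hφ : Measurable φ)
    (hψ : Measurable ψ) (hg : Measurable g) : Measurable (oscillatingTest T e φ ψ g) :=
  (measurable_separatedTest hφ hψ hg).comp
    ((measurable_fst.prodMk (hT.measurable_comp_smul e⁻¹)).prodMk
      (measurable_fst.const_smul (e ^ 2)⁻¹))

theorem measurable_unfoldedTest {e : ℝ} (he : e ≠ 0) (hφ : Measurable φ) (hψ : Measurable ψ)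
    (hg : Measurable g) : Measurable (unfoldedTest e φ ψ g) :=
  (measurable_separatedTest hφ hψ hg).comp
    ((((measurePreserving_periodicUnfolding (pow_ne_zero 2 he)).measurable.comp
      (measurable_fst.fst.prodMk measurable_snd)).prodMk measurable_fst.snd).prodMk measurable_snd)

theorem oscillatingTest_stochasticUnfolding (hT : IsDynSys μ T) {e : ℝ} (he : e ≠ 0)
    (hg : ZPeriodic g) (p : ((Fin N → ℝ) × Ω) × (Fin N → ℝ)) :
    oscillatingTest T e φ ψ g (stochasticUnfolding T e p) = unfoldedTest e φ ψ g p := by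
  simp only [oscillatingTest, unfoldedTest, separatedTest, stochasticUnfolding,
    hT.apply_neg_cancel, hg.apply_inv_smul_periodicUnfolding (pow_ne_zero 2 he)]

theorem eventually_abs_unfoldedTest_sub_le {κ : Type*} {l : Filter κ} {ε : κ → ℝ}
    (hε : ∀ k, ε k ≠ 0) (hε0 : Tendsto ε l (𝓝 0)) (hφ : UniformContinuous φ)
    (hψ : ∃ C, ∀ ω, |ψ ω| ≤ C) (hg : ∃ C, ∀ y, |g y| ≤ C) (ν : Measure ((Fin N → ℝ) × Ω))
    {δ : ℝ} (hδ : 0 < δ) :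
    ∀ᶠ k in l, ∀ᵐ p ∂ν.prod (cellMeasure (Fin N)),
      |unfoldedTest (ε k) φ ψ g p - separatedTest φ ψ g p| ≤ δ := by
  obtain ⟨⟨Cψ, hψ⟩, ⟨Cg, hg⟩⟩ := And.intro hψ hg
  obtain ⟨r, hr, hφr⟩ := Metric.uniformContinuous_iff.1 hφ (δ / (|Cψ * Cg| + 1)) (by positivity)
  have hsq : Tendsto (fun k => |ε k ^ 2|) l (𝓝 0) := by simpa using (hε0.pow 2).abs
  filter_upwards [hsq.eventually_lt_const hr] with k hk
  filter_upwards [Measure.quasiMeasurePreserving_snd.ae (ae_restrict_mem measurableSet_unitCell)]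
    with p hp
  have hdist := (dist_periodicUnfolding_le (pow_ne_zero 2 (hε k)) p.1.1 hp).trans_lt hk
  calc |unfoldedTest (ε k) φ ψ g p - separatedTest φ ψ g p|
      ≤ |φ (periodicUnfolding (ε k ^ 2) (p.1.1, p.2)) - φ p.1.1| * (Cψ * Cg) :=
        abs_separatedTest_sub_le hψ hg _ _ _ _
    _ ≤ |φ (periodicUnfolding (ε k ^ 2) (p.1.1, p.2)) - φ p.1.1| * (|Cψ * Cg| + 1) := by
        gcongr
        exact (le_abs_self _).trans (le_add_of_nonneg_right zero_le_one)
    _ ≤ δ / (|Cψ * Cg| + 1) * (|Cψ * Cg| + 1) := by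
        gcongr
        exact (hφr hdist).le
    _ = δ := div_mul_cancel₀ _ (by positivity)

end TestFunctions

section TwoScaleLimit

variable {N : ℕ} {Ω : Type*} [MeasurableSpace Ω] {μ : Measure Ω} [SFinite μ]
  {T : (Fin N → ℝ) → Ω → Ω} {Q : Set (Fin N → ℝ)} {φ g : (Fin N → ℝ) → ℝ} {ψ : Ω → ℝ}

theorem setIntegral_integral_mul_oscillating_eq (hT : IsDynSys μ T) (hQ : MeasurableSet Q) {e : ℝ}
    (he : e ≠ 0) {u : (Fin N → ℝ) → Ω → ℝ} (hu : Measurable fun q : (Fin N → ℝ) × Ω => u q.1 q.2)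
    (hint : Integrable (fun q : (Fin N → ℝ) × Ω => u q.1 q.2) ((volume.restrict Q).prod μ))
    (hφ : Measurable φ) (hψ : Measurable ψ) (hg : Measurable g) (hgper : ZPeriodic g)
    (hbound : ∃ C, ∀ p, |separatedTest φ ψ g p| ≤ C) :
    ∫ x in Q, ∫ ω, u x ω * φ x * ψ (T (e⁻¹ • x) ω) * g ((e ^ 2)⁻¹ • x) ∂μ =
      ∫ p, unfolded T Q e (fun q => u q.1 q.2) p * unfoldedTest e φ ψ g p
        ∂((volume.prod μ).prod (cellMeasure (Fin N))) := by
  have hosc := measurable_oscillatingTest hT e hφ hψ hg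
  obtain ⟨C, hC⟩ := hbound
  have hmul : Integrable (fun q => u q.1 q.2 * oscillatingTest T e φ ψ g q)
      ((volume.restrict Q).prod μ) :=
    hint.mul_bdd hosc.aestronglyMeasurable (.of_forall fun _ => hC _)
  simp_rw [← oscillatingTest_stochasticUnfolding hT he hgper]
  rw [integral_unfolded_mul hT hQ he hu hosc, integral_prod _ hmul]
  simp only [oscillatingTest, separatedTest, mul_assoc]

theorem setIntegral_integral_mul_separated_eq {u₀ : (Fin N → ℝ) → Ω → (Fin N → ℝ) → ℝ}
    (hint : Integrable (fun p : ((Fin N → ℝ) × Ω) × (Fin N → ℝ) => u₀ p.1.1 p.1.2 p.2)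
      (((volume.restrict Q).prod μ).prod (cellMeasure (Fin N))))
    (hφ : Measurable φ) (hψ : Measurable ψ) (hg : Measurable g)
    (hbound : ∃ C, ∀ p, |separatedTest φ ψ g p| ≤ C) :
    ∫ x in Q, ∫ ω, (∫ y in Ycube N, u₀ x ω y * φ x * ψ ω * g y) ∂μ =
      ∫ p, u₀ p.1.1 p.1.2 p.2 * separatedTest φ ψ g p
        ∂(((volume.restrict Q).prod μ).prod (cellMeasure (Fin N))) := by
  obtain ⟨C, hC⟩ := hbound
  have hmul : Integrable (fun p => u₀ p.1.1 p.1.2 p.2 * separatedTest φ ψ g p)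
      (((volume.restrict Q).prod μ).prod (cellMeasure (Fin N))) :=
    hint.mul_bdd (measurable_separatedTest hφ hψ hg).aestronglyMeasurable (.of_forall hC)
  rw [integral_prod _ hmul, integral_prod _ hmul.integral_prod_left, cellMeasure_eq_restrict_Icc]
  simp only [separatedTest, Ycube, mul_assoc]

theorem integral_mul_separatedTest_eq_restrict (hφ : tsupport φ ⊆ Q)
    (w : ((Fin N → ℝ) × Ω) × (Fin N → ℝ) → ℝ) :
    ∫ p, w p * separatedTest φ ψ g p ∂((volume.prod μ).prod (cellMeasure (Fin N))) =
      ∫ p, w p * separatedTest φ ψ g p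
        ∂(((volume.restrict Q).prod μ).prod (cellMeasure (Fin N))) := by
  rw [Measure.restrict_prod_eq_prod_univ, Measure.restrict_prod_eq_prod_univ]
  refine (setIntegral_eq_integral_of_forall_compl_eq_zero fun p hp => ?_).symm
  have hφp : φ p.1.1 = 0 := image_eq_zero_of_notMem_tsupport fun h => hp ⟨⟨hφ h, trivial⟩, trivial⟩
  rw [separatedTest, hφp, zero_mul, zero_mul, mul_zero]

theorem tendsto_integral_unfolded_mul_unfoldedTest_sub {κ : Type*} {l : Filter κ} {ε : κ → ℝ}
    (hT : IsDynSys μ T) (hQ : MeasurableSet Q) (hε : ∀ k, ε k ≠ 0) (hε0 : Tendsto ε l (𝓝 0))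
    {v : κ → (Fin N → ℝ) × Ω → ℝ} (hv : ∀ k, Measurable (v k)) {B : NNReal}
    (hB : ∀ k, eLpNorm (v k) 1 ((volume.restrict Q).prod μ) ≤ B)
    (hφ : UniformContinuous φ) (hφb : ∃ C, ∀ x, |φ x| ≤ C)
    (hψ : Measurable ψ) (hψb : ∃ C, ∀ ω, |ψ ω| ≤ C)
    (hg : Measurable g) (hgb : ∃ C, ∀ y, |g y| ≤ C) :
    Tendsto (fun k =>
      ∫ p, unfolded T Q (ε k) (v k) p * unfoldedTest (ε k) φ ψ g p
          ∂((volume.prod μ).prod (cellMeasure (Fin N))) -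
        ∫ p, unfolded T Q (ε k) (v k) p * separatedTest φ ψ g p
          ∂((volume.prod μ).prod (cellMeasure (Fin N)))) l (𝓝 0) := by
  obtain ⟨C, hC⟩ := exists_bound_separatedTest hφb hψb hgb
  have hnorm : ∀ k, eLpNorm (unfolded T Q (ε k) (v k)) 1
      ((volume.prod μ).prod (cellMeasure (Fin N))) ≤ B := fun k =>
    (eLpNorm_one_unfolded hT hQ (hε k) (hv k)).trans_le (hB k)
  refine tendsto_integral_mul_sub_integral_mul_zero (fun k => ⟨?_, (hnorm k).trans_lt coe_lt_top⟩)
    hnorm (fun k => memLp_top_of_bound ?_ C (.of_forall fun _ => hC _))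
    (fun _ => memLp_top_of_bound ?_ C (.of_forall hC))
    fun δ => eventually_abs_unfoldedTest_sub_le hε hε0 hφ hψb hgb _
  · exact (measurable_unfolded hT hQ (hε k) (hv k)).aestronglyMeasurable
  · exact (measurable_unfoldedTest (hε k) hφ.continuous.measurable hψ hg).aestronglyMeasurable
  · exact (measurable_separatedTest hφ.continuous.measurable hψ hg).aestronglyMeasurable

theorem weakStoch2Scale_of_tendsto_integral_unfolded_mul (hT : IsDynSys μ T)
    (hQ : MeasurableSet Q) {ε : ℕ → ℝ} (hε : ∀ k, ε k ≠ 0) (hε0 : Tendsto ε atTop (𝓝 0))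
    {u : ℕ → (Fin N → ℝ) → Ω → ℝ}
    (hu : ∀ k, Measurable fun q : (Fin N → ℝ) × Ω => u k q.1 q.2) {B : NNReal}
    (hB : ∀ k, eLpNorm (fun q : (Fin N → ℝ) × Ω => u k q.1 q.2) 1 ((volume.restrict Q).prod μ) ≤ B)
    {u₀ : (Fin N → ℝ) → Ω → (Fin N → ℝ) → ℝ}
    (hu₀ : Integrable (fun p : ((Fin N → ℝ) × Ω) × (Fin N → ℝ) => u₀ p.1.1 p.1.2 p.2)
      (((volume.restrict Q).prod μ).prod (cellMeasure (Fin N))))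
    (hlim : ∀ h : ((Fin N → ℝ) × Ω) × (Fin N → ℝ) → ℝ,
      MemLp h ∞ (((volume.restrict Q).prod μ).prod (cellMeasure (Fin N))) →
      Tendsto (fun k => ∫ p, unfolded T Q (ε k) (fun q => u k q.1 q.2) p * h p
          ∂(((volume.restrict Q).prod μ).prod (cellMeasure (Fin N)))) atTop
        (𝓝 (∫ p, u₀ p.1.1 p.1.2 p.2 * h p
          ∂(((volume.restrict Q).prod μ).prod (cellMeasure (Fin N)))))) :
    WeakStoch2Scale μ T Q ε u u₀ := by
  intro φ hφ hφc hφQ ψ hψ hψb g hg hgper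
  have hφm := hφ.continuous.measurable
  have hφb : ∃ C, ∀ x, |φ x| ≤ C := hφc.exists_bound_of_continuous hφ.continuous
  have hgb := hgper.exists_bound hg
  have hbound := exists_bound_separatedTest hφb hψb hgb
  have hint : ∀ k, Integrable (fun q : (Fin N → ℝ) × Ω => u k q.1 q.2)
      ((volume.restrict Q).prod μ) := fun k =>
    memLp_one_iff_integrable.1 ⟨(hu k).aestronglyMeasurable, (hB k).trans_lt coe_lt_top⟩
  have herror := tendsto_integral_unfolded_mul_unfoldedTest_sub hT hQ hε hε0 hu hB
    (hφc.uniformContinuous_of_continuous hφ.continuous) hφb hψ hψb hg.measurable hgb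
  have hmain := hlim _ (memLp_top_of_bound
    (measurable_separatedTest hφm hψ hg.measurable).aestronglyMeasurable hbound.choose
    (.of_forall hbound.choose_spec))
  simp_rw [← integral_mul_separatedTest_eq_restrict hφQ (unfolded T Q _ _)] at hmain
  rw [setIntegral_integral_mul_separated_eq hu₀ hφm hψ hg.measurable hbound]
  simp_rw [fun k => setIntegral_integral_mul_oscillating_eq hT hQ (hε k) (hu k) (hint k)
    hφm hψ hg.measurable hgper hbound]
  simpa only [sub_add_cancel, zero_add] using herror.add hmain

end TwoScaleLimit

theorem ae_eq_comp_fractPart {X ι β : Type*} [MeasurableSpace X] [Fintype ι] (ν : Measure X)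
    (w : X × (ι → ℝ) → β) :
    (fun p => w (p.1, fractPart p.2)) =ᵐ[ν.prod (cellMeasure ι)] w := by
  filter_upwards [Measure.quasiMeasurePreserving_snd.ae (ae_restrict_mem measurableSet_unitCell)]
    with p hp
  rw [fractPart_of_mem_unitCell hp]

theorem IsYoung.lintegral_unfolded_restrict_le {N : ℕ} {Ω : Type*} [MeasurableSpace Ω]
    {μ : Measure Ω} [SFinite μ] {Φ : ℝ → ℝ} (hΦ : IsYoung Φ) {T : (Fin N → ℝ) → Ω → Ω}
    (hT : IsDynSys μ T) {Q : Set (Fin N → ℝ)} (hQ : MeasurableSet Q) {e : ℝ} (he : e ≠ 0)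
    {v : (Fin N → ℝ) × Ω → ℝ} (hv : Measurable v) {C : ℝ} (hC : 0 < C) :
    ∫⁻ p, ENNReal.ofReal (Φ (|unfolded T Q e v p| / C))
        ∂(((volume.restrict Q).prod μ).prod (cellMeasure (Fin N))) ≤
      ∫⁻ q, ENNReal.ofReal (Φ (|v q| / C)) ∂((volume.restrict Q).prod μ) := by
  rw [← lintegral_comp_unfolded hT hQ he hv
    (hΦ.continuous_comp_abs_div hC).measurable.ennreal_ofReal (by simp [hΦ.2.2.1])]
  refine lintegral_mono' ?_ le_rfl
  exact Measure.prod_mono (Measure.prod_mono Measure.restrict_le_self le_rfl) le_rfl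

theorem stmt1_general {N : ℕ} {Ω : Type*} [MeasurableSpace Ω] {μ : Measure Ω} [IsFiniteMeasure μ]
    {Φ : ℝ → ℝ} (hΦ : IsYoung Φ) {T : (Fin N → ℝ) → Ω → Ω} (hT : IsDynSys μ T)
    {Q : Set (Fin N → ℝ)} (hQ : MeasurableSet Q) (hQfin : volume Q ≠ ∞)
    {ε : ℕ → ℝ} (hε : ∀ k, ε k ≠ 0) (hε0 : Tendsto ε atTop (𝓝 0))
    {u : ℕ → (Fin N → ℝ) → Ω → ℝ}
    (hu : ∀ k, Measurable fun p : (Fin N → ℝ) × Ω => u k p.1 p.2)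
    (hubd : (⨆ k, luxNorm Φ ((volume.restrict Q).prod μ) fun p => u k p.1 p.2) < ⊤) :
    ∃ σ : ℕ → ℕ, StrictMono σ ∧
      ∃ u₀ : (Fin N → ℝ) → Ω → (Fin N → ℝ) → ℝ,
        (Measurable fun p : ((Fin N → ℝ) × Ω) × (Fin N → ℝ) => u₀ p.1.1 p.1.2 p.2) ∧
        (∀ x ω, ZPeriodic (u₀ x ω)) ∧
        luxNorm Φ (((volume.restrict Q).prod μ).prod (volume.restrict (Ycube N)))
          (fun p => u₀ p.1.1 p.1.2 p.2) < ⊤ ∧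
        WeakStoch2Scale μ T Q (fun j => ε (σ j)) (fun j => u (σ j)) u₀ := by
  have : IsFiniteMeasure (volume.restrict Q) := isFiniteMeasure_restrict.2 hQfin
  obtain ⟨C, hC, hmodular⟩ := hΦ.exists_forall_lintegral_le_one hubd
  have hcoercive := hΦ.tendsto_comp_abs_div_div_norm hC
  obtain ⟨-, -, B, hB⟩ := uniformIntegrable_of_lintegral_le_of_tendsto_div_norm
    (fun k => (hu k).aestronglyMeasurable) hcoercive one_ne_top hmodular
  obtain ⟨σ, hσ, w, hw, hlim⟩ := exists_subseq_tendsto_integral_mul_of_lintegral_le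
    (hΦ.continuous_comp_abs_div hC) (hΦ.convexOn_comp_abs_div hC) hcoercive
    (fun k => (measurable_unfolded hT hQ (hε k) (hu k)).aestronglyMeasurable) one_ne_top
    (fun k => (hΦ.lintegral_unfolded_restrict_le hT hQ (hε k) (hu k) hC).trans (hmodular k))
  have hperiodic := ae_eq_comp_fractPart ((volume.restrict Q).prod μ) w
  refine ⟨σ, hσ, fun x ω y => w ((x, ω), fractPart y), ?_, ?_, ?_, ?_⟩
  · exact (Lp.stronglyMeasurable w).measurable.comp
      (measurable_fst.prodMk (measurable_fractPart.comp measurable_snd))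
  · exact fun x ω => .comp_fractPart fun y => w ((x, ω), y)
  · rw [Ycube, ← cellMeasure_eq_restrict_Icc]
    refine luxNorm_lt_top hC (hw.trans_eq' (lintegral_congr_ae ?_))
    filter_upwards [hperiodic] with p hp
    rw [← hp]
  · refine weakStoch2Scale_of_tendsto_integral_unfolded_mul hT hQ (fun j => hε (σ j))
      (hε0.comp hσ.tendsto_atTop) (fun j => hu (σ j)) (fun j => hB (σ j))
      ((L1.integrable_coeFn w).congr hperiodic.symm) fun h hh => ?_
    convert hlim h hh using 2
    exact integral_congr_ae (hperiodic.mul .rfl)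

/-- compactness for weak stochastic two-scale convergence in Orlicz spaces. -/
theorem stmt1 {N : ℕ} (hN : 1 ≤ N) {Ω : Type*} [MeasurableSpace Ω] (μ : Measure Ω)
    [IsProbabilityMeasure μ] (hgen : CountGenModNull μ)
    (Φ : ℝ → ℝ) (hΦ : IsYoung Φ) (hΦ2 : Delta2 Φ) (hΦc2 : Delta2 (conjY Φ))
    (T : (Fin N → ℝ) → Ω → Ω) (hT : IsDynSys μ T)
    (Q : Set (Fin N → ℝ)) (hQo : IsOpen Q) (hQb : Bornology.IsBounded Q)
    (ε : ℕ → ℝ) (hε : ∀ k, ε k ∈ Set.Ioc (0 : ℝ) 1) (hε0 : Tendsto ε atTop (nhds 0))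
    (u : ℕ → (Fin N → ℝ) → Ω → ℝ)
    (humeas : ∀ k, Measurable fun p : (Fin N → ℝ) × Ω => u k p.1 p.2)
    (hubd : (⨆ k, luxNorm Φ ((volume.restrict Q).prod μ) fun p => u k p.1 p.2) < ⊤) :
    ∃ σ : ℕ → ℕ, StrictMono σ ∧
      ∃ u₀ : (Fin N → ℝ) → Ω → (Fin N → ℝ) → ℝ,
        (Measurable fun p : ((Fin N → ℝ) × Ω) × (Fin N → ℝ) => u₀ p.1.1 p.1.2 p.2) ∧
        (∀ x ω, ZPeriodic (u₀ x ω)) ∧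
        luxNorm Φ (((volume.restrict Q).prod μ).prod (volume.restrict (Ycube N)))
          (fun p => u₀ p.1.1 p.1.2 p.2) < ⊤ ∧
        WeakStoch2Scale μ T Q (fun j => ε (σ j)) (fun j => u (σ j)) u₀ :=
  stmt1_general hΦ hT hQo.measurableSet hQb.measure_lt_top.ne (fun k => (hε k).1.ne') hε0 humeas
    hubd
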